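/- There exist a length space X, a nonempty subset Y ⊆ X, a nonnegative Lipschitz function F : Y → ℝ, and two functions u₁, u₂ : X → ℝ with u₁ ≠ u₂ such that both u₁ and u₂ are absolutely minimal (AM) extensions of F. (In particular, uniqueness of AM extensions can fail for unbounded nonnegative Lipschitz boundary data.) -/

import Mathlib

open Metric Set

noncomputable section

/-- The length of a continuous path: its total variation. -/
def pathLength {X : Type*} [MetricSpace X] {x y : X} (γ : Path x y) : ENNReal :=
  eVariationOn (fun t => γ t) (Set.univ : Set unitInterval)

/-- A metric space is a length space if the distance between any two points equals the
infimum of the lengths of continuous paths joining them. -/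
def IsLengthSpace (X : Type*) [MetricSpace X] : Prop :=
  ∀ x y : X, edist x y = ⨅ γ : Path x y, pathLength γ

/-- The (possibly infinite) Lipschitz constant of `u` on `S`:
`Lip_S u = sup {|u x - u y| / d(x,y) : x, y ∈ S, x ≠ y}`. -/
def lipOn {X : Type*} [MetricSpace X] (u : X → ℝ) (S : Set X) : ENNReal :=
  ⨆ (x : X) (_ : x ∈ S) (y : X) (_ : y ∈ S) (_ : x ≠ y),
    ENNReal.ofReal (|u x - u y| / dist x y)

/-- `u : X → ℝ` is an absolutely minimal (AM) extension of `F` prescribed on `Y`: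
`u` is Lipschitz, `u = F` on `Y`, and `Lip_U u = Lip_{∂U} u` for every open `U ⊆ X \ Y`. -/
def IsAMExtension {X : Type*} [MetricSpace X] (Y : Set X) (F u : X → ℝ) : Prop :=
  lipOn u Set.univ < ⊤ ∧ Set.EqOn u F Y ∧
    ∀ U : Set X, IsOpen U → U ⊆ Yᶜ → lipOn u U = lipOn u (frontier U)

/-!
A function `u` on a geodesic space is an AM extension of its values on `Y` as soon as its local
slope `s` at each point `x ∉ Y` is realised on paths from `x` to `Y` both upwards and downwards:
such paths leave every open set `U ⊆ Yᶜ` around `x`, so that `Lip_{∂U} u ≥ s`.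

In an `ℝ`-tree such functions can be prescribed on one half-line at a time, provided that whenever
the slope changes along a half-line a new one branches off on which the larger slope continues.
Let `u₀ ≤ u₁` rise along a half-line from a common value, `u₀` with the smaller slope. At a peak,
`u₁` starts to rest and `u₀` starts to descend with a slope somewhat larger than that of its ascent.
On the half-line branching off there `u₀` rises with this larger slope and `u₁` with its old one,
so that after finitely many peaks `u₀` is the steeper function and catches up with `u₁`; the meeting
point is put into `Y`. Behind each peak there is a valley from which both functions descend linearly
to the value `0`, again at a point of `Y`. As `u₁` descends there after having rested, another
half-line must branch off at the valley, and the construction is repeated on it. Thus each of the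
functions climbs from every point to a point of `Y`, but the heights to be reached are unbounded.
-/

section Geodesics

variable {X Z : Type*} [MetricSpace X] [MetricSpace Z] {x y z : X}

/-- `x` and `y` are the endpoints of a curve of length at most `dist x y`, given by a globally
defined `1`-Lipschitz parametrisation, of which only the values on `[0, dist x y]` matter. -/
def JoinedByGeodesic (x y : X) : Prop :=
  ∃ γ : ℝ → X, LipschitzWith 1 γ ∧ γ 0 = x ∧ γ (dist x y) = y

lemma JoinedByGeodesic.symm (h : JoinedByGeodesic x y) : JoinedByGeodesic y x := by
  obtain ⟨γ, hγ, rfl, hy⟩ := h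
  refine ⟨fun t => γ (dist (γ 0) y - t), ?_, ?_, ?_⟩
  · simpa [Function.comp_def] using
      hγ.comp ((LipschitzWith.const (dist (γ 0) y)).sub LipschitzWith.id)
  · simpa using hy
  · simp [dist_comm]

lemma JoinedByGeodesic.trans (hxy : JoinedByGeodesic x y) (hyz : JoinedByGeodesic y z)
    (h : dist x z = dist x y + dist y z) : JoinedByGeodesic x z := by
  obtain ⟨γ, hγ, γ_zero, γ_dist⟩ := hxy
  obtain ⟨δ, hδ, δ_zero, δ_dist⟩ := hyz
  set a := dist x y
  replace hγ s t : dist (γ s) (γ t) ≤ |s - t| := by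
    simpa [Real.dist_eq] using hγ.dist_le_mul s t
  replace hδ s t : dist (δ s) (δ t) ≤ |s - t| := by
    simpa [Real.dist_eq] using hδ.dist_le_mul s t
  refine ⟨fun t => if t ≤ a then γ t else δ (t - a), LipschitzWith.of_dist_le_mul ?_, ?_, ?_⟩
  · suffices H : ∀ s t, s ≤ t → dist (if s ≤ a then γ s else δ (s - a))
        (if t ≤ a then γ t else δ (t - a)) ≤ |s - t| by
      intro s t
      rw [NNReal.coe_one, one_mul, Real.dist_eq]
      rcases le_total s t with hst | hst
      · exact H s t hst
      · rw [dist_comm, abs_sub_comm]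
        exact H t s hst
    intro s t hst
    split_ifs with hs ht ht
    · exact hγ s t
    · calc dist (γ s) (δ (t - a)) ≤ dist (γ s) (γ a) + dist (δ 0) (δ (t - a)) := by
            rw [γ_dist, δ_zero]
            exact dist_triangle ..
        _ ≤ |s - a| + |0 - (t - a)| := add_le_add (hγ ..) (hδ ..)
        _ = |s - t| := by grind
    · exact absurd (hst.trans ht) hs
    · simpa using hδ (s - a) (t - a)
  · simp [a, dist_nonneg, γ_zero]
  · dsimp only
    split_ifs with hz
    · rw [h, add_le_iff_nonpos_right, dist_le_zero] at hz
      rw [h, hz, dist_self, add_zero, γ_dist, hz]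
    · rw [h, add_sub_cancel_left, δ_dist]

lemma JoinedByGeodesic.map {g : X → Z} (hg : Isometry g) (h : JoinedByGeodesic x y) :
    JoinedByGeodesic (g x) (g y) := by
  obtain ⟨γ, hγ, hx, hy⟩ := h
  exact ⟨g ∘ γ, by simpa using hg.lipschitz.comp hγ, by simp [hx], by simp [hg.dist_eq, hy]⟩

lemma pathLength_le_of_lipschitzWith {γ : ℝ → X} (hγ : LipschitzWith 1 γ) {L : ℝ} (hL : 0 ≤ L)
    (c : Path x y) (hc : ∀ t, c t = γ (L * t)) : pathLength c ≤ ENNReal.ofReal L := by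
  have hmono : MonotoneOn (fun t : unitInterval => L * (t : ℝ)) univ :=
    fun _ _ _ _ hst => mul_le_mul_of_nonneg_left hst hL
  calc pathLength c = eVariationOn (γ ∘ fun t : unitInterval => L * (t : ℝ)) univ := by
        simp only [pathLength, hc, Function.comp_def]
    _ ≤ (1 : NNReal) * eVariationOn (fun t : unitInterval => L * (t : ℝ)) univ :=
        hγ.lipschitzOnWith.comp_eVariationOn_le fun _ _ => mem_univ _
    _ = ENNReal.ofReal L := by
        have h := hmono.eVariationOn_eq (mem_univ (0 : unitInterval)) (mem_univ 1)
        rw [univ_inter, show Icc (0 : unitInterval) 1 = univ from Icc_bot_top] at h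
        simpa using h

lemma isLengthSpace_of_joinedByGeodesic (h : ∀ x y : X, JoinedByGeodesic x y) :
    IsLengthSpace X := by
  intro x y
  refine le_antisymm (le_iInf fun c => ?_) ?_
  · simpa [pathLength] using
      eVariationOn.edist_le (fun t => c t) (mem_univ (0 : unitInterval)) (mem_univ 1)
  · obtain ⟨γ, hγ, hx, hy⟩ := h x y
    let c : Path x y :=
      { toFun := fun t => γ (dist x y * t)
        continuous_toFun := hγ.continuous.comp (by fun_prop)
        source' := by simp [hx]
        target' := by simp [hy] }
    rw [edist_dist]
    exact iInf_le_of_le c (pathLength_le_of_lipschitzWith hγ dist_nonneg c fun _ => rfl)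

end Geodesics

open Filter Topology
open scoped NNReal

section LocalCriterion

variable {X Z : Type*} [MetricSpace X] [MetricSpace Z] {x y z : X} {u f : X → ℝ} {s s' : ℝ}
  {Y U : Set X} {K L : ℝ≥0}

lemma lipOn_le_coe_iff {S : Set X} : lipOn u S ≤ K ↔ LipschitzOnWith K u S := by
  simp only [lipOn, iSup_le_iff, lipschitzOnWith_iff_dist_le_mul]
  refine forall₄_congr fun x _ y _ => ?_
  rcases eq_or_ne x y with rfl | hxy
  · simp
  · simp [hxy, ENNReal.ofReal_le_iff_le_toReal, div_le_iff₀ (dist_pos.2 hxy), Real.dist_eq]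

/-- The pointwise slope of `u` at `x` is at most `s`, in the strong sense that the bound
`|u y - u x| ≤ s * dist y x` holds in a whole neighbourhood of `x`. -/
def LocalSlopeLE (u : X → ℝ) (s : ℝ) (x : X) : Prop :=
  ∀ᶠ y in 𝓝 x, |u y - u x| ≤ s * dist y x

lemma LocalSlopeLE.mono (h : LocalSlopeLE u s x) (hs : s ≤ s') : LocalSlopeLE u s' x :=
  Eventually.mono h fun _ hy => hy.trans (mul_le_mul_of_nonneg_right hs dist_nonneg)

lemma LocalSlopeLE.continuousAt (h : LocalSlopeLE u s x) : ContinuousAt u x := by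
  refine tendsto_iff_dist_tendsto_zero.2 (squeeze_zero' (.of_forall fun _ => dist_nonneg) h ?_)
  have : Continuous fun y => s * dist y x := by fun_prop
  simpa using this.tendsto x

lemma LocalSlopeLE.eventually_mem_range {g : Z → X} (hg : Isometry g) {a : Z}
    (h : LocalSlopeLE (u ∘ g) s a) :
    ∀ᶠ y in 𝓝 (g a), y ∈ range g → |u y - u (g a)| ≤ s * dist y (g a) := by
  rw [LocalSlopeLE, hg.isUniformInducing.isInducing.nhds_eq_comap, eventually_comap] at h
  filter_upwards [h] with y hy
  rintro ⟨b, rfl⟩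
  simpa [hg.dist_eq] using hy b rfl

lemma dist_comp_le_of_localSlopeLE {γ : ℝ → X} (hγ : LipschitzWith 1 γ) (hu : Continuous u)
    (hs : 0 ≤ s) {T : ℝ} (hT : 0 ≤ T) (h : ∀ t ∈ Ico 0 T, LocalSlopeLE u s (γ t)) :
    dist (u (γ 0)) (u (γ T)) ≤ s * T := by
  refine image_le_of_liminf_slope_right_le_deriv_boundary (f := fun t => dist (u (γ 0)) (u (γ t)))
    (B := fun t => s * t) (B' := fun _ => s) (by have := hγ.continuous; fun_prop) (by simp)
    (by fun_prop) (fun t _ => by simpa using ((hasDerivAt_id t).const_mul s).hasDerivWithinAt)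
    (fun t ht r hr => Eventually.frequently ?_) (right_mem_Icc.2 hT)
  have near : ∀ᶠ z in 𝓝[>] t, |u (γ z) - u (γ t)| ≤ s * dist (γ z) (γ t) :=
    (hγ.continuous.continuousAt.eventually (h t ht)).filter_mono nhdsWithin_le_nhds
  filter_upwards [near, self_mem_nhdsWithin] with z hz htz
  have htz : 0 < z - t := sub_pos.2 htz
  have hγz : dist (γ z) (γ t) ≤ z - t := by
    simpa [Real.dist_eq, abs_of_pos htz] using hγ.dist_le_mul z t
  have step := mul_le_mul_of_nonneg_left hγz hs
  have triangle := dist_triangle (u (γ 0)) (u (γ t)) (u (γ z))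
  rw [dist_comm (u (γ t)), Real.dist_eq (u (γ z))] at triangle
  rw [slope_def_field, div_lt_iff₀ htz]
  nlinarith

lemma exists_first_mem_frontier {γ : ℝ → X} (hγ : Continuous γ) (hU : IsOpen U) {t₀ : ℝ}
    (ht₀ : 0 ≤ t₀) (h0 : γ 0 ∈ U) (hout : γ t₀ ∉ U) :
    ∃ t ∈ Icc 0 t₀, γ t ∈ frontier U ∧ ∀ r ∈ Ico 0 t, γ r ∈ U := by
  obtain ⟨t, ⟨ht, htU⟩, hleast⟩ := (isCompact_Icc.inter_right
    (hU.isClosed_compl.preimage hγ)).exists_isLeast ⟨t₀, right_mem_Icc.2 ht₀, hout⟩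
  have before : ∀ r ∈ Ico 0 t, γ r ∈ U := fun r hr => by
    by_contra hrU
    exact (hleast ⟨⟨hr.1, hr.2.le.trans ht.2⟩, hrU⟩).not_gt hr.2
  have t_pos : 0 < t := ht.1.lt_of_ne fun h => htU (h ▸ h0)
  refine ⟨t, ht, hU.frontier_eq ▸ ⟨?_, htU⟩, before⟩
  refine mem_closure_of_tendsto (hγ.continuousAt.mono_left nhdsWithin_le_nhds) (b := 𝓝[<] t) ?_
  filter_upwards [Ioo_mem_nhdsLT t_pos] with r hr using before r ⟨hr.1.le, hr.2⟩

lemma lipschitzOnWith_of_frontier (hgeo : ∀ x y : X, JoinedByGeodesic x y) (hu : Continuous u)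
    (hU : IsOpen U) (hL : LipschitzOnWith L u (frontier U)) (h : ∀ x ∈ U, LocalSlopeLE u L x) :
    LipschitzOnWith L u U := by
  refine LipschitzOnWith.of_dist_le_mul fun x hx y hy => ?_
  obtain ⟨γ, hγ, rfl, hy'⟩ := hgeo x y
  set T := dist (γ 0) y
  have hT : 0 ≤ T := dist_nonneg
  by_cases hin : ∀ t ∈ Ico 0 T, γ t ∈ U
  · rw [← hy']
    exact dist_comp_le_of_localSlopeLE hγ hu L.2 hT fun t ht => h _ (hin t ht)
  push Not at hin
  obtain ⟨t₀, ht₀, hout⟩ := hin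
  have hγ' : LipschitzWith 1 fun t => γ (T - t) := by
    simpa [Function.comp_def] using hγ.comp ((LipschitzWith.const T).sub LipschitzWith.id)
  obtain ⟨a, ha, haU, ha'⟩ := exists_first_mem_frontier hγ.continuous hU ht₀.1 hx hout
  obtain ⟨b, hb, hbU, hb'⟩ := exists_first_mem_frontier hγ'.continuous hU
    (sub_nonneg.2 ht₀.2.le) (by simpa [hy'] using hy) (by simpa using hout)
  have start := dist_comp_le_of_localSlopeLE hγ hu L.2 ha.1 fun t ht => h _ (ha' t ht)
  have finish := dist_comp_le_of_localSlopeLE hγ' hu L.2 hb.1 fun t ht => h _ (hb' t ht)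
  have middle : dist (u (γ a)) (u (γ (T - b))) ≤ L * (T - b - a) := by
    refine (hL.dist_le_mul _ haU _ hbU).trans (mul_le_mul_of_nonneg_left ?_ L.2)
    rw [← abs_of_nonneg (by linarith [ha.2, hb.2] : 0 ≤ T - b - a)]
    simpa only [NNReal.coe_one, one_mul, dist_comm a, Real.dist_eq] using hγ.dist_le_mul a (T - b)
  rw [sub_zero, hy', dist_comm] at finish
  calc dist (u (γ 0)) (u y)
      ≤ dist (u (γ 0)) (u (γ a)) + dist (u (γ a)) (u (γ (T - b))) + dist (u (γ (T - b))) (u y) :=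
        dist_triangle4 ..
    _ ≤ L * a + L * (T - b - a) + L * b := add_le_add (add_le_add start middle) finish
    _ = L * T := by ring

/-- `f` grows at rate at least `s`, measured by the distance from `x`, along a connected set that
leads from `x` to `y`. -/
def Climbs (f : X → ℝ) (s : ℝ) (x y : X) : Prop :=
  ∃ C : Set X, IsPreconnected C ∧ x ∈ C ∧ y ∈ C ∧ ∀ p ∈ C, f x + s * dist x p ≤ f p

lemma Climbs.refl (f : X → ℝ) (s : ℝ) (x : X) : Climbs f s x x :=
  ⟨{x}, isPreconnected_singleton, rfl, rfl, by simp⟩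

lemma Climbs.mono (h : Climbs f s x y) (hs : s' ≤ s) : Climbs f s' x y := by
  obtain ⟨C, hC, hx, hy, hle⟩ := h
  exact ⟨C, hC, hx, hy, fun p hp =>
    (add_le_add_right (mul_le_mul_of_nonneg_right hs dist_nonneg) _).trans (hle p hp)⟩

lemma Climbs.trans (hs : 0 ≤ s) (hxy : Climbs f s x y) (hyz : Climbs f s y z) :
    Climbs f s x z := by
  obtain ⟨C, hC, hx, hy, hC'⟩ := hxy
  obtain ⟨D, hD, hy', hz, hD'⟩ := hyz
  refine ⟨C ∪ D, hC.union y hy hy' hD, .inl hx, .inr hz, ?_⟩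
  rintro p (hp | hp)
  · exact hC' p hp
  · calc f x + s * dist x p ≤ f x + s * dist x y + s * dist y p := by
          rw [add_assoc, ← mul_add]
          gcongr
          exact dist_triangle ..
      _ ≤ f y + s * dist y p := by gcongr; exact hC' y hy
      _ ≤ f p := hD' p hp

lemma Climbs.map {g : Z → X} (hg : LipschitzWith 1 g) (hs : 0 ≤ s) {a b : Z}
    (h : Climbs (f ∘ g) s a b) : Climbs f s (g a) (g b) := by
  obtain ⟨C, hC, ha, hb, hle⟩ := h
  refine ⟨g '' C, hC.image _ hg.continuous.continuousOn, mem_image_of_mem g ha,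
    mem_image_of_mem g hb, ?_⟩
  rintro _ ⟨p, hp, rfl⟩
  refine le_trans ?_ (hle p hp)
  gcongr
  · rfl
  · simpa using hg.dist_le_mul a p

lemma Climbs.exists_mem_frontier (h : Climbs f s x y) (hU : IsOpen U) (hx : x ∈ U) (hy : y ∉ U) :
    ∃ p ∈ frontier U, f x + s * dist x p ≤ f p := by
  obtain ⟨C, hC, hxC, hyC, hle⟩ := h
  by_contra! hfrontier
  have hsub : C ⊆ U ∪ (closure U)ᶜ := fun p hp => by
    by_contra! hpU
    rw [mem_union, not_or, notMem_compl_iff] at hpU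
    exact (hfrontier p (hU.frontier_eq ▸ ⟨hpU.2, hpU.1⟩)).not_ge (hle p hp)
  exact hy (hC.subset_left_of_subset_union hU isClosed_closure.isOpen_compl
    (disjoint_compl_right.mono_left subset_closure) hsub ⟨x, hxC, hx⟩ hyC)

lemma le_of_climbs_of_lipschitzOnWith_frontier (hU : IsOpen U) (hx : x ∈ U)
    (hL : LipschitzOnWith L u (frontier U)) (hy : y ∉ U) (hup : Climbs u s x y)
    (hz : z ∉ U) (hdown : Climbs (-u) s x z) : s ≤ L := by
  obtain ⟨p, hp, hup⟩ := hup.exists_mem_frontier hU hx hy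
  obtain ⟨q, hq, hdown⟩ := hdown.exists_mem_frontier hU hx hz
  have hxp : 0 < dist x p := dist_pos.2 <| by
    rintro rfl
    exact (hU.frontier_eq ▸ hp).2 hx
  have hdist : 0 < dist x p + dist x q := by positivity
  refine le_of_mul_le_mul_right ?_ hdist
  calc s * (dist x p + dist x q) ≤ u p - u q := by simp only [Pi.neg_apply] at hdown; linarith
    _ ≤ dist (u p) (u q) := le_abs_self _
    _ ≤ L * dist p q := hL.dist_le_mul p hp q hq
    _ ≤ L * (dist x p + dist x q) := by gcongr; exact dist_triangle_left ..

/-- The local condition that yields absolute minimality: the slope of `u` at a point `x ∉ Y` is at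
most `s`, and `u` realises the rate `s` both upwards and downwards on the way from `x` to `Y`.
The bound `K`, which does not depend on `x`, makes `u` globally Lipschitz. -/
def IsBalancedAt (Y : Set X) (K : ℝ≥0) (u : X → ℝ) (x : X) : Prop :=
  ∃ s : ℝ, 0 ≤ s ∧ s ≤ K ∧ LocalSlopeLE u s x ∧
    (x ∈ Y ∨ s = 0 ∨ (∃ y ∈ Y, Climbs u s x y) ∧ ∃ y ∈ Y, Climbs (-u) s x y)

lemma continuous_of_isBalancedAt (h : ∀ x, IsBalancedAt Y K u x) : Continuous u :=
  continuous_iff_continuousAt.2 fun x =>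
    let ⟨_, _, _, hs, _⟩ := h x
    hs.continuousAt

lemma IsBalancedAt.localSlopeLE (h : IsBalancedAt Y K u x) (hU : IsOpen U) (hUY : U ⊆ Yᶜ)
    (hx : x ∈ U) (hL : LipschitzOnWith L u (frontier U)) : LocalSlopeLE u L x := by
  obtain ⟨s, -, -, hs, hxY | rfl | ⟨⟨y, hy, hup⟩, ⟨z, hz, hdown⟩⟩⟩ := h
  · exact absurd hxY (hUY hx)
  · exact hs.mono L.2
  · exact hs.mono <| le_of_climbs_of_lipschitzOnWith_frontier hU hx hL (fun h => hUY h hy) hup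
      (fun h => hUY h hz) hdown

lemma lipschitzWith_of_isBalancedAt (hgeo : ∀ x y : X, JoinedByGeodesic x y)
    (h : ∀ x, IsBalancedAt Y K u x) : LipschitzWith K u :=
  lipschitzOnWith_univ.1 <| lipschitzOnWith_of_frontier hgeo (continuous_of_isBalancedAt h)
    isOpen_univ (by simp) fun x _ =>
      let ⟨_, _, hsK, hs, _⟩ := h x
      hs.mono hsK

theorem isAMExtension_of_isBalancedAt {F : X → ℝ} (hgeo : ∀ x y : X, JoinedByGeodesic x y)
    (h : ∀ x, IsBalancedAt Y K u x) (hF : EqOn u F Y) : IsAMExtension Y F u := by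
  have hlip := lipschitzWith_of_isBalancedAt hgeo h
  refine ⟨(lipOn_le_coe_iff.2 hlip.lipschitzOnWith).trans_lt ENNReal.coe_lt_top, hF,
    fun U hU hUY => ENNReal.eq_of_forall_le_nnreal_iff fun L => ?_⟩
  rw [lipOn_le_coe_iff, lipOn_le_coe_iff]
  exact ⟨fun hL => (hL.closure hlip.continuous.continuousOn).mono frontier_subset_closure,
    fun hL => lipschitzOnWith_of_frontier hgeo hlip.continuous hU hL fun x hx =>
      (h x).localSlopeLE hU hUY hx hL⟩

end LocalCriterion

section ConstSlope

variable {f g : ℝ → ℝ} {k k' s : ℝ} {S S' : Set ℝ}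

/-- `f` is affine with slope `k` on `S`. -/
def HasConstSlopeOn (f : ℝ → ℝ) (k : ℝ) (S : Set ℝ) : Prop :=
  ∀ x ∈ S, ∀ y ∈ S, f y - f x = k * (y - x)

lemma HasConstSlopeOn.mono (h : HasConstSlopeOn f k S) (hS : S' ⊆ S) : HasConstSlopeOn f k S' :=
  fun x hx y hy => h x (hS hx) y (hS hy)

lemma HasConstSlopeOn.congr (h : HasConstSlopeOn f k S) (hfg : EqOn g f S) :
    HasConstSlopeOn g k S :=
  fun x hx y hy => by rw [hfg hx, hfg hy, h x hx y hy]

lemma HasConstSlopeOn.neg (h : HasConstSlopeOn f k S) : HasConstSlopeOn (-f) (-k) S :=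
  fun x hx y hy => by simp only [Pi.neg_apply]; linarith [h x hx y hy]

lemma HasConstSlopeOn.abs_sub_le {x y : ℝ} (h : HasConstSlopeOn f k S) (hk : |k| ≤ s)
    (hx : x ∈ S) (hy : y ∈ S) : |f y - f x| ≤ s * dist y x := by
  rw [h x hx y hy, abs_mul, Real.dist_eq]
  gcongr

lemma HasConstSlopeOn.localSlopeLE {a t b : ℝ} (h : HasConstSlopeOn f k (Icc a t))
    (h' : HasConstSlopeOn f k' (Icc t b)) (hat : a < t) (htb : t < b) (hk : |k| ≤ s)
    (hk' : |k'| ≤ s) : LocalSlopeLE f s t := by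
  filter_upwards [Ioo_mem_nhds hat htb] with y hy
  rcases le_total y t with hyt | hty
  · exact h.abs_sub_le hk (right_mem_Icc.2 hat.le) ⟨hy.1.le, hyt⟩
  · exact h'.abs_sub_le hk' (left_mem_Icc.2 htb.le) ⟨hty, hy.2.le⟩

lemma HasConstSlopeOn.climbs {x y : ℝ} (h : HasConstSlopeOn f k (uIcc x y))
    (hs : s * |y - x| ≤ k * (y - x)) : Climbs f s x y := by
  refine ⟨uIcc x y, isPreconnected_uIcc, left_mem_uIcc, right_mem_uIcc, fun p hp => ?_⟩
  obtain ⟨θ, ⟨hθ, -⟩, rfl⟩ := (segment_eq_uIcc x y ▸ segment_eq_image' ℝ x y) ▸ hp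
  have key := mul_le_mul_of_nonneg_left hs hθ
  have := h x left_mem_uIcc _ hp
  simp only [smul_eq_mul, Real.dist_eq] at *
  rw [abs_sub_comm, add_sub_cancel_left, abs_mul, abs_of_nonneg hθ]
  linarith

end ConstSlope

/-- The universal comb: a half-line issues from the root, and from every other point of any
half-line a fresh half-line branches off. The list of `t`'s records how a point is reached:
`cons t _ x` is the point to which `x` is moved when its root is placed at position `t` of the
initial half-line. -/
inductive Comb
  | root : Comb
  | cons (t : ℝ) (ht : 0 < t) (x : Comb) : Comb

namespace Comb

variable {s t : ℝ} {ht : 0 < t} {x y : Comb}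

/-- Distance to the root. -/
def height : Comb → ℝ
  | root => 0
  | cons t _ x => t + height x

@[simp] lemma height_root : root.height = 0 := rfl

@[simp] lemma height_cons : (cons t ht x).height = t + x.height := rfl

lemma height_nonneg : ∀ x : Comb, 0 ≤ x.height
  | root => le_rfl
  | cons _ ht x => add_nonneg ht.le x.height_nonneg

lemma height_pos : ∀ {x : Comb}, x ≠ root → 0 < x.height
  | root, h => absurd rfl h
  | cons _ ht x, _ => add_pos_of_pos_of_nonneg ht x.height_nonneg

/-- The length of the unique arc between two points, which follows the common initial part of the
two itineraries only as far as they agree. -/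
def arcLength : Comb → Comb → ℝ
  | root, y => y.height
  | cons t _ x, root => t + x.height
  | cons t _ x, cons s _ y => if t = s then arcLength x y else |t - s| + x.height + y.height

lemma arcLength_self (x : Comb) : arcLength x x = 0 := by
  induction x with
  | root => rfl
  | cons t ht x ih => simpa [arcLength]

lemma arcLength_comm (x y : Comb) : arcLength x y = arcLength y x := by
  induction x generalizing y with
  | root => cases y <;> rfl
  | cons t ht x ih => cases y <;> grind [arcLength, height]

lemma height_le_arcLength_add (x y : Comb) : x.height ≤ arcLength x y + y.height := by
  induction x generalizing y with
  | root => simpa [arcLength] using add_nonneg y.height_nonneg y.height_nonneg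
  | cons t ht x ih => cases y <;> grind [arcLength, height, height_nonneg]

lemma arcLength_le (x y : Comb) : arcLength x y ≤ x.height + y.height := by
  induction x generalizing y with
  | root => simp [arcLength]
  | cons t ht x ih => cases y <;> grind [arcLength, height, height_nonneg]

lemma arcLength_triangle (x y z : Comb) : arcLength x z ≤ arcLength x y + arcLength y z := by
  induction x generalizing y z with
  | root => simpa [arcLength, arcLength_comm, add_comm] using height_le_arcLength_add z y
  | cons t ht x ih =>
    rcases y with _ | ⟨s, hs, y⟩
    · exact arcLength_le ..
    rcases z with _ | ⟨r, hr, z⟩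
    · exact height_le_arcLength_add (cons t ht x) (cons s hs y)
    have := ih y z
    have := arcLength_le x z
    have := height_le_arcLength_add x y
    have := height_le_arcLength_add z y
    have := y.height_nonneg
    grind [arcLength, arcLength_comm]

lemma eq_of_arcLength_eq_zero {x y : Comb} (h : arcLength x y = 0) : x = y := by
  induction x generalizing y with
  | root =>
    by_contra hy
    exact (height_pos (Ne.symm hy)).ne' h
  | cons t ht x ih =>
    rcases y with _ | ⟨s, hs, y⟩
    · exact absurd h (height_pos (x := cons t ht x) (by simp)).ne'
    · have := x.height_nonneg
      have := y.height_nonneg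
      grind [arcLength]

instance : MetricSpace Comb where
  dist := arcLength
  dist_self := arcLength_self
  dist_comm := arcLength_comm
  dist_triangle := arcLength_triangle
  eq_of_dist_eq_zero := eq_of_arcLength_eq_zero

@[simp] lemma dist_root_left (x : Comb) : dist root x = x.height := rfl

@[simp] lemma dist_root_right (x : Comb) : dist x root = x.height := dist_comm ..

lemma dist_cons_of_ne {hs : 0 < s} (h : s ≠ t) :
    dist (cons s hs x) (cons t ht y) = |s - t| + x.height + y.height :=
  if_neg h

lemma isometry_cons (ht : 0 < t) : Isometry (cons t ht) :=
  .of_dist_eq fun _ _ => if_pos rfl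

/-- The point at position `t` of the initial half-line. Negative positions are mapped to the root,
which makes `ray` defined and `1`-Lipschitz on all of `ℝ`. -/
def ray (t : ℝ) : Comb := if h : 0 < t then cons t h root else root

lemma ray_of_pos (ht : 0 < t) : ray t = cons t ht root := dif_pos ht

@[simp] lemma ray_zero : ray 0 = root := dif_neg (lt_irrefl 0)

lemma dist_ray (s t : ℝ) : dist (ray s) (ray t) = |max s 0 - max t 0| := by
  rcases le_or_gt s 0 with hs | hs <;> rcases le_or_gt t 0 with ht | ht <;>
    rcases eq_or_ne s t with rfl | hst <;>
    simp_all [ray, not_lt_of_ge, le_of_lt, abs_of_pos, dist_cons_of_ne]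

lemma lipschitzWith_ray : LipschitzWith 1 ray :=
  .of_dist_le_mul fun s t => by
    simpa [dist_ray, Real.dist_eq] using abs_max_sub_max_le_abs s t 0

/-- The position at which the arc from the root to a point leaves the initial half-line. -/
def foot : Comb → ℝ
  | root => 0
  | cons t _ _ => t

@[simp] lemma foot_root : root.foot = 0 := rfl

@[simp] lemma foot_cons : (cons t ht x).foot = t := rfl

lemma foot_ray (ht : 0 ≤ t) : (ray t).foot = t := by
  rcases ht.eq_or_lt with rfl | ht
  · simp
  · simp [ray_of_pos ht]

lemma abs_foot_sub_le (x y : Comb) : |x.foot - y.foot| ≤ dist x y := by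
  rcases x with _ | ⟨s, hs, x⟩ <;> rcases y with _ | ⟨t, ht, y⟩
  · simp
  · simp [abs_of_pos ht, y.height_nonneg]
  · simp [abs_of_pos hs, x.height_nonneg]
  · rcases eq_or_ne s t with rfl | hst
    · simp [dist_nonneg]
    · rw [dist_cons_of_ne hst, foot_cons, foot_cons]
      linarith [x.height_nonneg, y.height_nonneg]

lemma continuous_foot : Continuous foot :=
  LipschitzWith.continuous (K := 1) <| .of_dist_le_mul fun x y => by
    simpa [Real.dist_eq] using abs_foot_sub_le x y

lemma eventually_mem_range_cons (ht : 0 < t) (hx : x ≠ root) :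
    ∀ᶠ y in 𝓝 (cons t ht x), y ∈ range (cons t ht) := by
  filter_upwards [ball_mem_nhds _ (height_pos hx)] with y hy
  rcases y with _ | ⟨s, hs, y⟩
  · exact absurd hy (by simp [ht.le])
  · rcases eq_or_ne s t with rfl | hst
    · exact mem_range_self y
    · rw [mem_ball, dist_cons_of_ne hst] at hy
      linarith [abs_nonneg (s - t), y.height_nonneg]

lemma joinedByGeodesic_ray (hs : 0 ≤ s) (ht : 0 ≤ t) : JoinedByGeodesic (ray s) (ray t) := by
  wlog hst : s ≤ t generalizing s t
  · exact (this ht hs (le_of_not_ge hst)).symm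
  refine ⟨fun r => ray (s + r), ?_, by simp, ?_⟩
  · simpa [Function.comp_def] using
      lipschitzWith_ray.comp ((LipschitzWith.const s).add LipschitzWith.id)
  · simp [dist_ray, hs, ht, abs_of_nonpos, hst]

lemma joinedByGeodesic_root (x : Comb) : JoinedByGeodesic root x := by
  induction x with
  | root => simpa using joinedByGeodesic_ray le_rfl le_rfl
  | cons t ht x ih =>
    have along : JoinedByGeodesic root (cons t ht root) := by
      simpa [ray_of_pos ht] using joinedByGeodesic_ray le_rfl ht.le
    exact along.trans (ih.map (isometry_cons ht)) (by simp [(isometry_cons ht).dist_eq])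

theorem joinedByGeodesic (x y : Comb) : JoinedByGeodesic x y := by
  induction x generalizing y with
  | root => exact joinedByGeodesic_root y
  | cons s hs x ih =>
    rcases y with _ | ⟨t, ht, y⟩
    · exact (joinedByGeodesic_root _).symm
    rcases eq_or_ne s t with rfl | hst
    · exact (ih y).map (isometry_cons hs)
    have along : JoinedByGeodesic (cons s hs root) (cons t ht root) := by
      simpa [ray_of_pos, hs, ht] using joinedByGeodesic_ray hs.le ht.le
    have down := (joinedByGeodesic_root x).symm.map (isometry_cons hs)
    have up := (joinedByGeodesic_root y).map (isometry_cons ht)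
    refine (down.trans along ?_).trans up ?_ <;>
    · simp only [dist_cons_of_ne hst, (isometry_cons _).dist_eq, dist_root_left, dist_root_right,
        height_root]
      ring

end Comb

open Comb

/-- A rule that singles out a subtree of the comb and labels its half-lines by `σ`: the half-line
with label `n` ends at `tip n`, and the half-line that branches off at position `t` has label
`branch n t`, or is not part of the subtree if `branch n t = none`. -/
structure Branching (σ : Type*) where
  branch : σ → ℝ → Option σ
  tip : σ → ℝ
  finite_branch (n : σ) : {t | branch n t ≠ none}.Finite
  tip_pos (n : σ) : 0 < tip n
  branch_tip (n : σ) : branch n (tip n) = none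

namespace Branching

variable {σ : Type*} (B : Branching σ) {n m : σ} {t k s : ℝ} {ht : 0 < t} {x : Comb}

/-- The endpoints of the half-lines of the subtree whose initial half-line has label `n`. -/
def IsTip : σ → Comb → Prop
  | _, root => False
  | n, cons t _ x => (B.branch n t).elim (t = B.tip n ∧ x = root) fun m => IsTip m x

lemma isTip_ray (n : σ) : B.IsTip n (ray (B.tip n)) := by
  simp [ray_of_pos (B.tip_pos n), IsTip, B.branch_tip]

variable {B} in
lemma IsTip.cons (h : B.branch n t = some m) (ht : 0 < t) (hx : B.IsTip m x) :
    B.IsTip n (cons t ht x) := by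
  simpa [IsTip, h]

/-- Functions on the half-lines of a branching, compatible at the branch points, together with
slopes at the initial points of the half-lines. -/
structure Profile where
  val : σ → ℝ → ℝ
  slope : σ → ℝ
  val_branch {n m : σ} {t : ℝ} : B.branch n t = some m → val m 0 = val n t
  slope_nonneg (n : σ) : 0 ≤ slope n
  slope_le_one (n : σ) : slope n ≤ 1
  localSlopeLE_zero (n : σ) : LocalSlopeLE (val n) (slope n) 0

namespace Profile

variable {B} (P : B.Profile)

/-- The function on the comb that restricts to the given functions on the half-lines of the
branching, and is constant on the components of the complement. -/
def glue : σ → Comb → ℝ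
  | n, root => P.val n 0
  | n, cons t _ x => (B.branch n t).elim (P.val n t) fun m => glue m x

@[simp] lemma glue_root : P.glue n root = P.val n 0 := rfl

lemma glue_cons_of_branch (h : B.branch n t = some m) (ht : 0 < t) (x : Comb) :
    P.glue n (cons t ht x) = P.glue m x := by
  simp [glue, h]

lemma glue_comp_cons (h : B.branch n t = some m) (ht : 0 < t) :
    P.glue n ∘ cons t ht = P.glue m :=
  funext (P.glue_cons_of_branch h ht)

lemma glue_of_branch_foot (h : B.branch n x.foot = none) : P.glue n x = P.val n x.foot := by
  cases x with
  | root => rfl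
  | cons t ht x => simp_all [glue]

lemma glue_ray (ht : 0 ≤ t) : P.glue n (ray t) = P.val n t := by
  rcases ht.eq_or_lt with rfl | ht
  · simp
  · rw [ray_of_pos ht]
    cases h : B.branch n t with
    | none => exact P.glue_of_branch_foot h
    | some m => rw [P.glue_cons_of_branch h, glue_root, P.val_branch h]

lemma exists_glue_eq_val_tip (hx : B.IsTip n x) :
    ∃ m, ∀ P : B.Profile, P.glue n x = P.val m (B.tip m) := by
  induction x generalizing n with
  | root => exact hx.elim
  | cons t ht x ih =>
    cases h : B.branch n t with
    | none =>
      obtain ⟨rfl, rfl⟩ : t = B.tip n ∧ x = root := by simpa [IsTip, h] using hx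
      exact ⟨n, fun P => P.glue_of_branch_foot h⟩
    | some m =>
      obtain ⟨l, hl⟩ := ih (n := m) (by simpa [IsTip, h] using hx)
      exact ⟨l, fun P => (P.glue_cons_of_branch h ht x).trans (hl P)⟩

lemma eventually_branch_foot (B : Branching σ) (n : σ) (x : Comb) :
    ∀ᶠ y in 𝓝 x, y.foot = x.foot ∨ B.branch n y.foot = none := by
  have hfin : {t | B.branch n t ≠ none ∧ t ≠ x.foot}.Finite :=
    (B.finite_branch n).subset fun t ht => ht.1
  have hnear := hfin.isClosed.isOpen_compl.mem_nhds (x := x.foot) fun h => h.2 rfl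
  filter_upwards [continuous_foot.continuousAt.preimage_mem_nhds hnear] with y hy
  simp only [mem_preimage, mem_compl_iff, mem_ofPred_eq, not_and_or, not_not] at hy
  exact hy.symm

lemma eventually_abs_glue_sub_le (hs : 0 ≤ s) (ht : 0 ≤ t) (h : LocalSlopeLE (P.val n) s t) :
    ∀ᶠ y in 𝓝 (ray t), B.branch n y.foot = none →
      |P.glue n y - P.val n t| ≤ s * dist y (ray t) := by
  rw [LocalSlopeLE, ← foot_ray ht] at h
  filter_upwards [continuous_foot.continuousAt.eventually h] with y hy hbranch
  rw [P.glue_of_branch_foot hbranch]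
  rw [foot_ray ht] at hy
  refine hy.trans (mul_le_mul_of_nonneg_left ?_ hs)
  simpa [foot_ray ht, Real.dist_eq] using abs_foot_sub_le y (ray t)

lemma localSlopeLE_glue_root (n : σ) : LocalSlopeLE (P.glue n) (P.slope n) root := by
  have near := P.eventually_abs_glue_sub_le (P.slope_nonneg n) le_rfl (P.localSlopeLE_zero n)
  rw [ray_zero] at near
  filter_upwards [near, eventually_branch_foot B n root] with y hy hfoot
  rcases y with _ | ⟨t, ht, y⟩
  · simp
  · exact hy (hfoot.resolve_left ht.ne')

lemma localSlopeLE_glue_ray (hs : 0 ≤ s) (ht : 0 < t) (h : LocalSlopeLE (P.val n) s t)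
    (hbranch : ∀ m, B.branch n t = some m → P.slope m ≤ s) :
    LocalSlopeLE (P.glue n) s (ray t) := by
  have off : ∀ᶠ y in 𝓝 (ray t), ∀ m, B.branch n t = some m → y ∈ range (cons t ht) →
      |P.glue n y - P.val n t| ≤ s * dist y (ray t) := by
    cases hm : B.branch n t with
    | none => simp
    | some m =>
      have := ((P.localSlopeLE_glue_root m).mono (hbranch m hm))
      rw [← P.glue_comp_cons hm ht] at this
      rw [ray_of_pos ht]
      filter_upwards [this.eventually_mem_range (isometry_cons ht)] with y hy _ _
      simpa [← ray_of_pos ht, P.glue_ray ht.le] using hy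
  filter_upwards [off, P.eventually_abs_glue_sub_le hs ht.le h,
    eventually_branch_foot B n (ray t)] with y hoff hon hfoot
  rw [P.glue_ray ht.le]
  rw [foot_ray ht.le] at hfoot
  rcases hfoot with hfoot | hfoot
  · cases hm : B.branch n t with
    | none => exact hon (hfoot ▸ hm)
    | some m =>
      refine hoff m hm ?_
      cases y with
      | root => exact absurd hfoot ht.ne
      | cons r hr y =>
        obtain rfl : r = t := hfoot
        exact mem_range_self y
  · exact hon hfoot

/-- In the subtree with label `n`, the glued function climbs from `x` to a tip at rate `s`. -/
def CanClimb (n : σ) (s : ℝ) (x : Comb) : Prop :=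
  ∃ y, B.IsTip n y ∧ Climbs (P.glue n) s x y

/-- In the subtree with label `n`, the glued function descends from `x` at rate `s` to a tip, or
to the root, in which case the descent must be able to continue in the half-line from which the
subtree branches off; the condition `s ≤ slope n` guarantees this. -/
def CanDescend (n : σ) (s : ℝ) (x : Comb) : Prop :=
  ∃ y, (B.IsTip n y ∨ y = root ∧ s ≤ P.slope n) ∧ Climbs (-P.glue n) s x y

variable {P} {s' : ℝ}

lemma CanClimb.mono (h : P.CanClimb n s' x) (hs : s ≤ s') : P.CanClimb n s x := by
  obtain ⟨y, hy, hxy⟩ := h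
  exact ⟨y, hy, hxy.mono hs⟩

lemma CanDescend.mono (h : P.CanDescend n s' x) (hs : s ≤ s') : P.CanDescend n s x := by
  obtain ⟨y, hy, hxy⟩ := h
  exact ⟨y, hy.imp_right (And.imp_right hs.trans), hxy.mono hs⟩

lemma canClimb_tip : P.CanClimb n s (ray (B.tip n)) :=
  ⟨_, B.isTip_ray n, .refl ..⟩

lemma canDescend_tip : P.CanDescend n s (ray (B.tip n)) :=
  ⟨_, .inl (B.isTip_ray n), .refl ..⟩

lemma canDescend_root (hs : s ≤ P.slope n) : P.CanDescend n s root :=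
  ⟨root, .inr ⟨rfl, hs⟩, .refl ..⟩

lemma CanClimb.cons (h : B.branch n t = some m) (ht : 0 < t) (hs : 0 ≤ s)
    (hx : P.CanClimb m s x) : P.CanClimb n s (cons t ht x) := by
  obtain ⟨y, hy, hxy⟩ := hx
  rw [← P.glue_comp_cons h ht] at hxy
  exact ⟨_, hy.cons h ht, hxy.map (isometry_cons ht).lipschitz hs⟩

lemma CanDescend.cons (h : B.branch n t = some m) (ht : 0 < t) (hs : 0 ≤ s)
    (hout : P.CanDescend n (P.slope m) (ray t)) (hx : P.CanDescend m s x) :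
    P.CanDescend n s (cons t ht x) := by
  obtain ⟨y, hy, hxy⟩ := hx
  rw [← P.glue_comp_cons h ht] at hxy
  replace hxy := Climbs.map (f := -P.glue n) (isometry_cons ht).lipschitz hs hxy
  rcases hy with hy | ⟨rfl, hsm⟩
  · exact ⟨_, .inl (hy.cons h ht), hxy⟩
  · obtain ⟨z, hz, hout⟩ := hout.mono hsm
    rw [ray_of_pos ht] at hout
    exact ⟨z, hz, hxy.trans hs hout⟩

lemma climbs_ray {f : Comb → ℝ} {g : ℝ → ℝ} {t' : ℝ} (hfg : ∀ r, 0 ≤ r → f (ray r) = g r)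
    (hg : HasConstSlopeOn g k (uIcc t t')) (ht : 0 ≤ t) (ht' : 0 ≤ t') (hs : 0 ≤ s)
    (hk : s * |t' - t| ≤ k * (t' - t)) : Climbs f s (ray t) (ray t') :=
  .map lipschitzWith_ray hs <|
    (hg.congr fun r hr => hfg r ((le_inf ht ht').trans hr.1)).climbs hk

lemma CanClimb.ray {t' : ℝ} (h : P.CanClimb n s (ray t'))
    (hval : HasConstSlopeOn (P.val n) k (uIcc t t')) (ht : 0 ≤ t) (ht' : 0 ≤ t') (hs : 0 ≤ s)
    (hk : s * |t' - t| ≤ k * (t' - t)) : P.CanClimb n s (ray t) := by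
  obtain ⟨y, hy, hclimb⟩ := h
  exact ⟨y, hy, (climbs_ray (fun r hr => P.glue_ray hr) hval ht ht' hs hk).trans hs hclimb⟩

lemma CanDescend.ray {t' : ℝ} (h : P.CanDescend n s (ray t'))
    (hval : HasConstSlopeOn (P.val n) k (uIcc t t')) (ht : 0 ≤ t) (ht' : 0 ≤ t') (hs : 0 ≤ s)
    (hk : s * |t' - t| ≤ -k * (t' - t)) : P.CanDescend n s (ray t) := by
  obtain ⟨y, hy, hdesc⟩ := h
  refine ⟨y, hy, (climbs_ray (g := -P.val n) (fun r hr => ?_) hval.neg ht ht' hs hk).trans hs hdesc⟩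
  simp [P.glue_ray hr]

variable (P)

/-- The variant of `IsBalancedAt` for a point of the subtree with label `n`, in which a descent
may also leave the subtree through its root. -/
def IsBalancedIn (n : σ) (x : Comb) : Prop :=
  ∃ s, 0 ≤ s ∧ s ≤ 1 ∧ LocalSlopeLE (P.glue n) s x ∧
    (B.IsTip n x ∨ s = 0 ∨ P.CanClimb n s x ∧ P.CanDescend n s x)

variable {P}

lemma isBalancedIn_cons_of_branch_eq_none (h : B.branch n t = none) (ht : 0 < t) (hx : x ≠ root) :
    P.IsBalancedIn n (cons t ht x) := by
  refine ⟨0, le_rfl, zero_le_one, ?_, .inr (.inl rfl)⟩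
  filter_upwards [eventually_mem_range_cons ht hx]
  rintro _ ⟨y, rfl⟩
  simp [P.glue_of_branch_foot (x := cons t ht _) h]

lemma IsBalancedIn.cons (h : B.branch n t = some m) (ht : 0 < t) (hx : x ≠ root)
    (hout : P.CanDescend n (P.slope m) (Comb.ray t)) (hbal : P.IsBalancedIn m x) :
    P.IsBalancedIn n (cons t ht x) := by
  obtain ⟨s, hs, hs1, hslope, hcases⟩ := hbal
  refine ⟨s, hs, hs1, ?_, hcases.imp (.cons h ht) <| .imp_right <|
    .imp (.cons h ht hs) (.cons h ht hs hout)⟩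
  rw [← P.glue_comp_cons h ht] at hslope
  filter_upwards [hslope.eventually_mem_range (isometry_cons ht), eventually_mem_range_cons ht hx]
    with y hy hmem using hy hmem

lemma isBalancedIn_of_ray (hray : ∀ n t, 0 < t → P.IsBalancedIn n (ray t))
    (hout : ∀ n m t, B.branch n t = some m → P.CanDescend n (P.slope m) (ray t)) (hx : x ≠ root) :
    P.IsBalancedIn n x := by
  induction x generalizing n with
  | root => exact absurd rfl hx
  | cons t ht x ih =>
    rcases eq_or_ne x root with rfl | hx
    · simpa [ray_of_pos ht] using hray n t ht
    cases h : B.branch n t with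
    | none => exact isBalancedIn_cons_of_branch_eq_none h ht hx
    | some m => exact (ih hx).cons h ht hx (hout n m t h)

theorem isBalancedAt_glue (hray : ∀ n t, 0 < t → P.IsBalancedIn n (ray t))
    (hout : ∀ n m t, B.branch n t = some m → P.CanDescend n (P.slope m) (ray t)) (n : σ)
    (x : Comb) : IsBalancedAt {y | B.IsTip n y ∨ y = root} 1 (P.glue n) x := by
  rcases eq_or_ne x root with rfl | hx
  · exact ⟨P.slope n, P.slope_nonneg n, P.slope_le_one n, P.localSlopeLE_glue_root n,
      .inl (.inr rfl)⟩
  obtain ⟨s, hs, hs1, hslope, hcases⟩ := isBalancedIn_of_ray hray hout hx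
  refine ⟨s, hs, hs1, hslope, hcases.imp .inl (.imp_right (.imp ?_ ?_))⟩
  · rintro ⟨y, hy, hclimb⟩
    exact ⟨y, .inl hy, hclimb⟩
  · rintro ⟨y, hy, hdesc⟩
    exact ⟨y, hy.imp_right And.left, hdesc⟩

end Profile
end Branching

/-- The label of a half-line in the example: the values at its initial point and the initial
slopes of the lower function `0` and of the upper function `1`. The condition `slope_one_sq_lt`
leaves room for increasing `slope 0` indefinitely while `slope 1` is kept. -/
structure Stage where
  val : Fin 2 → ℝ
  slope : Fin 2 → ℝ
  val_zero_nonneg : 0 ≤ val 0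
  val_zero_le : val 0 ≤ val 1
  slope_pos (i : Fin 2) : 0 < slope i
  slope_zero_le_one : slope 0 ≤ 1
  slope_one_sq_lt : slope 1 ^ 2 < slope 0
  val_lt_or_slope_lt : val 0 < val 1 ∨ slope 0 < slope 1

namespace Stage

variable (n : Stage)

lemma slope_le_one (i : Fin 2) : n.slope i ≤ 1 := by
  have := n.slope_one_sq_lt
  have := n.slope_zero_le_one
  fin_cases i
  · exact n.slope_zero_le_one
  · exact (sq_le_one_iff₀ (n.slope_pos 1).le).1 (by linarith)

/-- The factor by which the slope of the lower function increases at a peak, chosen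
halfway between `1` and the bound `slope 0 / slope 1 ^ 2` that `steep_mul_sq_lt` requires. -/
def growth : ℝ := (1 + n.slope 0 / n.slope 1 ^ 2) / 2

/-- The slope of the lower function after a peak. -/
def steep : ℝ := n.slope 0 * n.growth

lemma one_lt_growth : 1 < n.growth := by
  have := (one_lt_div (pow_pos (n.slope_pos 1) 2)).2 n.slope_one_sq_lt
  unfold growth
  linarith

lemma slope_zero_lt_steep : n.slope 0 < n.steep :=
  lt_mul_of_one_lt_right (n.slope_pos 0) n.one_lt_growth

lemma steep_pos : 0 < n.steep := (n.slope_pos 0).trans n.slope_zero_lt_steep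

lemma steep_mul_sq_lt : n.steep * n.slope 1 ^ 2 < n.slope 0 ^ 2 := by
  have h0 := n.slope_pos 0
  have h1 := n.slope_pos 1
  have : n.steep * n.slope 1 ^ 2 = (n.slope 0 * n.slope 1 ^ 2 + n.slope 0 ^ 2) / 2 := by
    simp only [steep, growth]
    field_simp
  nlinarith [n.slope_one_sq_lt]

lemma steep_le_one (h : n.slope 0 ≤ n.slope 1) : n.steep ≤ 1 := by
  have h0 := n.slope_pos 0
  have h1 := n.slope_pos 1
  have ratio : n.slope 0 ^ 2 / n.slope 1 ^ 2 ≤ 1 := by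
    rw [div_le_one (by positivity)]
    gcongr
  have : n.steep = (n.slope 0 + n.slope 0 ^ 2 / n.slope 1 ^ 2) / 2 := by
    simp only [steep, growth]
    ring
  linarith [n.slope_zero_le_one]

lemma exists_runUp : ∃ l, 0 < l ∧
    √n.steep * (n.val 1 + n.slope 1 * l) < n.val 0 + n.slope 0 * l - n.steep := by
  have room : 0 < n.slope 0 - √n.steep * n.slope 1 := by
    rw [sub_pos]
    refine lt_of_pow_lt_pow_left₀ 2 (n.slope_pos 0).le ?_
    rw [mul_pow, Real.sq_sqrt n.steep_pos.le]
    exact n.steep_mul_sq_lt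
  obtain ⟨l, hl, h⟩ := ((Filter.eventually_gt_atTop 0).and <|
    (Filter.tendsto_id.const_mul_atTop room).eventually_gt_atTop
      (√n.steep * n.val 1 + n.steep - n.val 0)).exists
  refine ⟨l, hl, ?_⟩
  simp only [id] at h
  linarith

/-- The position of the peak. It is so large that the upper function, falling from its value at the
peak to `0` while the lower one falls to `0` with slope `steep`, has slope at most `√steep`. -/
def runUp : ℝ := n.exists_runUp.choose

/-- The values at the peak. -/
def peak (i : Fin 2) : ℝ := n.val i + n.slope i * n.runUp

/-- The rates of descent from the peak to the valley, which takes place over a unit length: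
the lower function descends, the upper one rests. -/
def drop : Fin 2 → ℝ := ![n.steep, 0]

/-- The values at the valley. -/
def valley (i : Fin 2) : ℝ := n.peak i - n.drop i

/-- The distance between the valley and the tip, where both functions vanish. -/
def fallTime : ℝ := n.valley 0 / n.steep

/-- The rates of descent from the valley to the tip. -/
def fall (i : Fin 2) : ℝ := n.valley i / n.fallTime

lemma runUp_pos : 0 < n.runUp := n.exists_runUp.choose_spec.1

lemma sqrt_steep_mul_valley_one_lt : √n.steep * n.valley 1 < n.valley 0 := by
  simpa [valley, peak, drop, runUp] using n.exists_runUp.choose_spec.2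

lemma drop_nonneg (i : Fin 2) : 0 ≤ n.drop i := by
  fin_cases i
  · exact n.steep_pos.le
  · exact le_rfl

lemma val_one_nonneg : 0 ≤ n.val 1 := n.val_zero_nonneg.trans n.val_zero_le

lemma peak_one_pos : 0 < n.peak 1 :=
  add_pos_of_nonneg_of_pos n.val_one_nonneg (mul_pos (n.slope_pos 1) n.runUp_pos)

lemma valley_pos (i : Fin 2) : 0 < n.valley i := by
  have upper : 0 < n.valley 1 := by simpa [valley, drop] using n.peak_one_pos
  fin_cases i
  · exact (mul_pos (Real.sqrt_pos.2 n.steep_pos) upper).trans n.sqrt_steep_mul_valley_one_lt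
  · exact upper

lemma valley_zero_lt_peak_zero : n.valley 0 < n.peak 0 := sub_lt_self _ n.steep_pos

lemma fallTime_pos : 0 < n.fallTime := div_pos (n.valley_pos 0) n.steep_pos

lemma fall_pos (i : Fin 2) : 0 < n.fall i := div_pos (n.valley_pos i) n.fallTime_pos

lemma fall_zero : n.fall 0 = n.steep := div_div_cancel₀ (n.valley_pos 0).ne'

lemma fall_one_sq_lt : n.fall 1 ^ 2 < n.steep := by
  have hp := n.steep_pos
  have : n.fall 1 < √n.steep := by
    rw [fall, div_lt_iff₀ n.fallTime_pos, fallTime, mul_div_left_comm, Real.sqrt_div_self',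
      mul_one_div, lt_div_iff₀ (Real.sqrt_pos.2 hp), mul_comm]
    exact n.sqrt_steep_mul_valley_one_lt
  exact (Real.lt_sqrt (n.fall_pos 1).le).1 this

lemma drop_le_fall (i : Fin 2) : n.drop i ≤ n.fall i := by
  fin_cases i
  · exact n.fall_zero.ge
  · exact (n.fall_pos 1).le

variable {n}

lemma peak_zero_lt_peak_one (h : n.slope 0 ≤ n.slope 1) : n.peak 0 < n.peak 1 := by
  rcases n.val_lt_or_slope_lt with hval | hslope
  · exact add_lt_add_of_lt_of_le hval (mul_le_mul_of_nonneg_right h n.runUp_pos.le)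
  · exact add_lt_add_of_le_of_lt n.val_zero_le (mul_lt_mul_of_pos_right hslope n.runUp_pos)

lemma valley_zero_lt_valley_one (h : n.slope 0 ≤ n.slope 1) : n.valley 0 < n.valley 1 :=
  calc n.valley 0 < n.peak 0 := n.valley_zero_lt_peak_zero
    _ < n.peak 1 := peak_zero_lt_peak_one h
    _ = n.valley 1 := by simp [valley, drop]

/-- The half-line branching off at the peak. -/
def afterPeak (h : n.slope 0 ≤ n.slope 1) : Stage where
  val := n.peak
  slope := ![n.steep, n.slope 1]
  val_zero_nonneg := ((n.valley_pos 0).trans n.valley_zero_lt_peak_zero).le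
  val_zero_le := (peak_zero_lt_peak_one h).le
  slope_pos := Fin.forall_fin_two.2 ⟨n.steep_pos, n.slope_pos 1⟩
  slope_zero_le_one := n.steep_le_one h
  slope_one_sq_lt := n.slope_one_sq_lt.trans n.slope_zero_lt_steep
  val_lt_or_slope_lt := .inl (peak_zero_lt_peak_one h)

/-- The half-line branching off at the valley. -/
def afterValley (h : n.slope 0 ≤ n.slope 1) : Stage where
  val := n.valley
  slope := n.fall
  val_zero_nonneg := (n.valley_pos 0).le
  val_zero_le := (valley_zero_lt_valley_one h).le
  slope_pos := n.fall_pos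
  slope_zero_le_one := n.fall_zero.trans_le (n.steep_le_one h)
  slope_one_sq_lt := n.fall_one_sq_lt.trans_eq n.fall_zero.symm
  val_lt_or_slope_lt := .inl (valley_zero_lt_valley_one h)

lemma slope_le_slope_afterPeak (h : n.slope 0 ≤ n.slope 1) (i : Fin 2) :
    n.slope i ≤ (afterPeak h).slope i := by
  fin_cases i
  · exact n.slope_zero_lt_steep.le
  · exact le_rfl

lemma drop_le_slope_afterPeak (h : n.slope 0 ≤ n.slope 1) (i : Fin 2) :
    n.drop i ≤ (afterPeak h).slope i := by
  fin_cases i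
  · exact le_rfl
  · exact (n.slope_pos 1).le

lemma growth_le_growth_afterPeak (h : n.slope 0 ≤ n.slope 1) :
    n.growth ≤ (afterPeak h).growth := by
  have := n.slope_zero_lt_steep.le
  simp only [growth, afterPeak, Matrix.cons_val_zero, Matrix.cons_val_one]
  gcongr

variable (n)

/-- The position at which the two functions meet if the lower one has the larger slope. -/
def meet : ℝ := (n.val 1 - n.val 0) / (n.slope 0 - n.slope 1)

lemma meet_pos (h : ¬ n.slope 0 ≤ n.slope 1) : 0 < n.meet :=
  div_pos (sub_pos.2 (n.val_lt_or_slope_lt.resolve_right fun h' => h h'.le))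
    (sub_pos.2 (not_le.1 h))

lemma val_add_slope_mul_meet (h : ¬ n.slope 0 ≤ n.slope 1) (i : Fin 2) :
    n.val i + n.slope i * n.meet = n.val 0 + n.slope 0 * n.meet := by
  have hne : n.slope 0 - n.slope 1 ≠ 0 := (sub_pos.2 (not_le.1 h)).ne'
  have : n.meet * (n.slope 0 - n.slope 1) = n.val 1 - n.val 0 := div_mul_cancel₀ _ hne
  fin_cases i
  · rfl
  · simp only [Fin.mk_one]
    linarith

/-- The length of the half-line that belongs to the subtree. -/
def tip : ℝ := if n.slope 0 ≤ n.slope 1 then n.runUp + 1 + n.fallTime else n.meet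

lemma runUp_add_one_lt_tip (h : n.slope 0 ≤ n.slope 1) : n.runUp + 1 < n.tip := by
  simpa [tip, h] using n.fallTime_pos

lemma tip_pos : 0 < n.tip := by
  by_cases h : n.slope 0 ≤ n.slope 1
  · linarith [n.runUp_pos, n.runUp_add_one_lt_tip h]
  · simpa [tip, h] using n.meet_pos h

/-- The subtree of the example: a half-line on which the functions do not get closer initially has
a peak and a valley with a half-line branching off at each of them; otherwise nothing branches off
and the half-line is cut off where the functions meet. -/
def branching : Branching Stage where
  branch n t :=
    if h : n.slope 0 ≤ n.slope 1 then
      if t = n.runUp then some (afterPeak h)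
      else if t = n.runUp + 1 then some (afterValley h) else none
    else none
  tip := tip
  finite_branch n := (toFinite {n.runUp, n.runUp + 1}).subset fun t ht => by
    by_contra hnot
    simp_all
  tip_pos := tip_pos
  branch_tip n := by
    by_cases h : n.slope 0 ≤ n.slope 1
    · have := n.runUp_add_one_lt_tip h
      rw [dif_pos h, if_neg (by linarith), if_neg this.ne']
    · exact dif_neg h

variable {n} {t : ℝ} {i : Fin 2}

lemma branch_runUp (h : n.slope 0 ≤ n.slope 1) :
    branching.branch n n.runUp = some (afterPeak h) := by
  simp [branching, h]

lemma branch_runUp_add_one (h : n.slope 0 ≤ n.slope 1) :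
    branching.branch n (n.runUp + 1) = some (afterValley h) := by
  simp [branching, h]

lemma of_branch_eq_some {m : Stage} (hm : branching.branch n t = some m) :
    ∃ h : n.slope 0 ≤ n.slope 1, t = n.runUp ∧ m = afterPeak h ∨
      t = n.runUp + 1 ∧ m = afterValley h := by
  grind [branching]

lemma branch_of_ne (h₁ : t ≠ n.runUp) (h₂ : t ≠ n.runUp + 1) :
    branching.branch n t = none := by
  simp [branching, h₁, h₂]

lemma branch_of_not_le (h : ¬ n.slope 0 ≤ n.slope 1) : branching.branch n t = none :=
  dif_neg h

/-- The graph of the function `i` on a half-line: it rises up to the peak, descends to the valley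
and falls to the tip, or rises up to the tip if that is the point where the functions meet. -/
def graph (i : Fin 2) (n : Stage) (t : ℝ) : ℝ :=
  if n.slope 0 ≤ n.slope 1 then
    n.val i + n.slope i * min t n.runUp
      - n.drop i * (max n.runUp (min t (n.runUp + 1)) - n.runUp)
      - n.fall i * (max (n.runUp + 1) (min t n.tip) - (n.runUp + 1))
  else n.val i + n.slope i * min t n.tip

lemma hasConstSlopeOn_graph_Iic_runUp (h : n.slope 0 ≤ n.slope 1) :
    HasConstSlopeOn (graph i n) (n.slope i) (Iic n.runUp) := by
  intro x hx y hy
  have := n.runUp_add_one_lt_tip h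
  grind [graph]

lemma hasConstSlopeOn_graph_Icc_runUp (h : n.slope 0 ≤ n.slope 1) :
    HasConstSlopeOn (graph i n) (-n.drop i) (Icc n.runUp (n.runUp + 1)) := by
  intro x hx y hy
  have := n.runUp_add_one_lt_tip h
  grind [graph]

lemma hasConstSlopeOn_graph_Icc_tip (h : n.slope 0 ≤ n.slope 1) :
    HasConstSlopeOn (graph i n) (-n.fall i) (Icc (n.runUp + 1) n.tip) := by
  intro x hx y hy
  grind [graph]

lemma hasConstSlopeOn_graph_Iic_tip (h : ¬ n.slope 0 ≤ n.slope 1) :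
    HasConstSlopeOn (graph i n) (n.slope i) (Iic n.tip) := by
  intro x hx y hy
  grind [graph]

lemma hasConstSlopeOn_graph_Ici_tip : HasConstSlopeOn (graph i n) 0 (Ici n.tip) := by
  intro x hx y hy
  have := n.runUp_add_one_lt_tip
  grind [graph]

lemma graph_of_le_runUp (h : n.slope 0 ≤ n.slope 1) (ht : t ≤ n.runUp) :
    graph i n t = n.val i + n.slope i * t := by
  have := n.runUp_add_one_lt_tip h
  grind [graph]

lemma graph_zero (i : Fin 2) (n : Stage) : graph i n 0 = n.val i := by
  by_cases h : n.slope 0 ≤ n.slope 1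
  · simp [graph_of_le_runUp h n.runUp_pos.le]
  · simp [graph, h, n.tip_pos.le]

lemma graph_runUp (h : n.slope 0 ≤ n.slope 1) : graph i n n.runUp = n.peak i :=
  graph_of_le_runUp h le_rfl

lemma graph_runUp_add_one (h : n.slope 0 ≤ n.slope 1) :
    graph i n (n.runUp + 1) = n.valley i := by
  have := hasConstSlopeOn_graph_Icc_runUp (i := i) h n.runUp (by simp) (n.runUp + 1) (by simp)
  rw [graph_runUp h] at this
  rw [valley]
  linarith

lemma graph_tip_of_le (h : n.slope 0 ≤ n.slope 1) : graph i n n.tip = 0 := by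
  have hlt := n.runUp_add_one_lt_tip h
  have := hasConstSlopeOn_graph_Icc_tip (i := i) h _ (left_mem_Icc.2 hlt.le) _
    (right_mem_Icc.2 hlt.le)
  have hfall : n.fall i * n.fallTime = n.valley i := div_mul_cancel₀ _ n.fallTime_pos.ne'
  have htip : n.tip - (n.runUp + 1) = n.fallTime := by simp [tip, h]
  rw [graph_runUp_add_one h, htip] at this
  linarith

lemma graph_tip_of_not_le (h : ¬ n.slope 0 ≤ n.slope 1) :
    graph i n n.tip = n.val 0 + n.slope 0 * n.meet := by
  simp [graph, tip, h, n.val_add_slope_mul_meet h i]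

lemma graph_tip_eq (i j : Fin 2) : graph i n n.tip = graph j n n.tip := by
  by_cases h : n.slope 0 ≤ n.slope 1
  · rw [graph_tip_of_le h, graph_tip_of_le h]
  · rw [graph_tip_of_not_le h, graph_tip_of_not_le h]

lemma graph_tip_nonneg (i : Fin 2) : 0 ≤ graph i n n.tip := by
  by_cases h : n.slope 0 ≤ n.slope 1
  · exact (graph_tip_of_le h).ge
  · rw [graph_tip_of_not_le h]
    exact add_nonneg n.val_zero_nonneg (mul_pos (n.slope_pos 0) (n.meet_pos h)).le

lemma localSlopeLE_graph_zero (i : Fin 2) (n : Stage) :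
    LocalSlopeLE (graph i n) (n.slope i) 0 := by
  have hle : |n.slope i| ≤ n.slope i := (abs_of_pos (n.slope_pos i)).le
  have near {b : ℝ} (hb : 0 < b) (hconst : HasConstSlopeOn (graph i n) (n.slope i) (Iic b)) :
      LocalSlopeLE (graph i n) (n.slope i) 0 :=
    (hconst.mono (Icc_subset_Iic_self.trans (Iic_subset_Iic.2 hb.le))).localSlopeLE
      (hconst.mono Icc_subset_Iic_self) neg_one_lt_zero hb hle hle
  by_cases h : n.slope 0 ≤ n.slope 1
  · exact near n.runUp_pos (hasConstSlopeOn_graph_Iic_runUp h)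
  · exact near n.tip_pos (hasConstSlopeOn_graph_Iic_tip h)

lemma fall_le_one (h : n.slope 0 ≤ n.slope 1) (i : Fin 2) : n.fall i ≤ 1 :=
  (afterValley h).slope_le_one i

lemma localSlopeLE_graph_tip (i : Fin 2) (n : Stage) : LocalSlopeLE (graph i n) 1 n.tip := by
  have right : HasConstSlopeOn (graph i n) 0 (Icc n.tip (n.tip + 1)) :=
    hasConstSlopeOn_graph_Ici_tip.mono Icc_subset_Ici_self
  by_cases h : n.slope 0 ≤ n.slope 1
  · refine (hasConstSlopeOn_graph_Icc_tip h).localSlopeLE right (n.runUp_add_one_lt_tip h)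
      (lt_add_one _) ?_ (by simp)
    rw [abs_neg, abs_of_pos (n.fall_pos i)]
    exact fall_le_one h i
  · refine ((hasConstSlopeOn_graph_Iic_tip h).mono Icc_subset_Iic_self).localSlopeLE right
      n.tip_pos (lt_add_one _) ?_ (by simp)
    rw [abs_of_pos (n.slope_pos i)]
    exact n.slope_le_one i

/-- The data that define the function `i` on the subtree. -/
def profile (i : Fin 2) : branching.Profile where
  val := graph i
  slope n := n.slope i
  val_branch {n m t} hm := by
    rw [graph_zero]
    obtain ⟨h, ⟨rfl, rfl⟩ | ⟨rfl, rfl⟩⟩ := of_branch_eq_some hm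
    · exact (graph_runUp h).symm
    · exact (graph_runUp_add_one h).symm
  slope_nonneg n := (n.slope_pos i).le
  slope_le_one n := n.slope_le_one i
  localSlopeLE_zero n := localSlopeLE_graph_zero i n

open Branching.Profile

lemma canClimb_of_le_tip (h : ¬ n.slope 0 ≤ n.slope 1) (ht : 0 ≤ t) (htip : t ≤ n.tip) :
    (profile i).CanClimb n (n.slope i) (ray t) := by
  refine canClimb_tip.ray
    ((hasConstSlopeOn_graph_Iic_tip h).mono (ordConnected_Iic.uIcc_subset htip self_mem_Iic))
    ht n.tip_pos.le (n.slope_pos i).le ?_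
  exact (congrArg _ (abs_of_nonneg (sub_nonneg.2 htip))).le

lemma canClimb_of_le_runUp (h : n.slope 0 ≤ n.slope 1) (ht : 0 ≤ t) (htl : t ≤ n.runUp)
    (hpeak : (profile i).CanClimb (afterPeak h) ((afterPeak h).slope i) root) :
    (profile i).CanClimb n (n.slope i) (ray t) := by
  have hrun : (profile i).CanClimb n (n.slope i) (ray n.runUp) := by
    rw [ray_of_pos n.runUp_pos]
    exact (hpeak.mono (slope_le_slope_afterPeak h i)).cons (branch_runUp h) n.runUp_pos
      (n.slope_pos i).le
  refine hrun.ray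
    ((hasConstSlopeOn_graph_Iic_runUp h).mono (ordConnected_Iic.uIcc_subset htl self_mem_Iic))
    ht n.runUp_pos.le (n.slope_pos i).le ?_
  rw [abs_of_nonneg (sub_nonneg.2 htl)]

-- Each peak multiplies `slope 0` by at least `ρ` and keeps `slope 1`, so the order of the slopes
-- is reversed after finitely many peaks.
lemma canClimb_root_of_lt_mul_pow {ρ : ℝ} (hρ : 0 ≤ ρ) (N : ℕ) (n : Stage) (hn : ρ ≤ n.growth)
    (hN : n.slope 1 < n.slope 0 * ρ ^ N) : (profile i).CanClimb n (n.slope i) root := by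
  rw [← ray_zero]
  induction N generalizing n with
  | zero => exact canClimb_of_le_tip (by simpa using hN) le_rfl n.tip_pos.le
  | succ N ih =>
    by_cases h : n.slope 0 ≤ n.slope 1
    · refine canClimb_of_le_runUp h le_rfl n.runUp_pos.le ?_
      rw [← ray_zero]
      refine ih _ (hn.trans (growth_le_growth_afterPeak h)) ?_
      calc n.slope 1 < n.slope 0 * ρ ^ (N + 1) := hN
        _ = n.slope 0 * ρ * ρ ^ N := by ring
        _ ≤ n.slope 0 * n.growth * ρ ^ N := by gcongr; exact (n.slope_pos 0).le
    · exact canClimb_of_le_tip h le_rfl n.tip_pos.le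

lemma canClimb_root (i : Fin 2) (n : Stage) : (profile i).CanClimb n (n.slope i) root := by
  obtain ⟨N, hN⟩ := pow_unbounded_of_one_lt (n.slope 1 / n.slope 0) n.one_lt_growth
  exact canClimb_root_of_lt_mul_pow (zero_lt_one.trans n.one_lt_growth).le N n le_rfl
    ((div_lt_iff₀' (n.slope_pos 0)).1 hN)

lemma canClimb_runUp (h : n.slope 0 ≤ n.slope 1) :
    (profile i).CanClimb n ((afterPeak h).slope i) (ray n.runUp) := by
  rw [ray_of_pos n.runUp_pos]
  exact (canClimb_root i _).cons (branch_runUp h) n.runUp_pos ((afterPeak h).slope_pos i).le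

lemma runUp_add_one_pos : 0 < n.runUp + 1 := add_pos n.runUp_pos one_pos

lemma canClimb_runUp_add_one (h : n.slope 0 ≤ n.slope 1) :
    (profile i).CanClimb n (n.fall i) (ray (n.runUp + 1)) := by
  rw [ray_of_pos runUp_add_one_pos]
  exact (canClimb_root i _).cons (branch_runUp_add_one h) runUp_add_one_pos (n.fall_pos i).le

lemma canDescend_of_mem_Icc_tip (h : n.slope 0 ≤ n.slope 1) (ht : t ∈ Icc (n.runUp + 1) n.tip) :
    (profile i).CanDescend n (n.fall i) (ray t) := by
  refine canDescend_tip.ray ((hasConstSlopeOn_graph_Icc_tip h).mono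
    (ordConnected_Icc.uIcc_subset ht (right_mem_Icc.2 (ht.1.trans ht.2))))
    (runUp_add_one_pos.le.trans ht.1) n.tip_pos.le (n.fall_pos i).le ?_
  rw [neg_neg]
  exact (congrArg _ (abs_of_nonneg (sub_nonneg.2 ht.2))).le

lemma canDescend_of_mem_Icc_runUp (h : n.slope 0 ≤ n.slope 1)
    (ht : t ∈ Icc n.runUp (n.runUp + 1)) : (profile i).CanDescend n (n.drop i) (ray t) := by
  have hvalley : (profile i).CanDescend n (n.drop i) (ray (n.runUp + 1)) :=
    (canDescend_of_mem_Icc_tip h (left_mem_Icc.2 (n.runUp_add_one_lt_tip h).le)).mono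
      (n.drop_le_fall i)
  refine hvalley.ray ((hasConstSlopeOn_graph_Icc_runUp h).mono
    (ordConnected_Icc.uIcc_subset ht (right_mem_Icc.2 (ht.1.trans ht.2))))
    (n.runUp_pos.le.trans ht.1) runUp_add_one_pos.le (n.drop_nonneg i) ?_
  rw [neg_neg]
  exact (congrArg _ (abs_of_nonneg (sub_nonneg.2 ht.2))).le

lemma canDescend_of_hasConstSlopeOn {b : ℝ}
    (hconst : HasConstSlopeOn (graph i n) (n.slope i) (Iic b)) (ht : t ∈ Icc 0 b) :
    (profile i).CanDescend n (n.slope i) (ray t) := by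
  refine CanDescend.ray (t' := 0) ?_ (hconst.mono
    (ordConnected_Iic.uIcc_subset ht.2 (ht.1.trans ht.2))) ht.1 le_rfl (n.slope_pos i).le ?_
  · rw [ray_zero]
    exact canDescend_root le_rfl
  · rw [zero_sub, abs_neg, abs_of_nonneg ht.1, neg_mul_neg]

lemma canDescend_runUp (h : n.slope 0 ≤ n.slope 1) :
    (profile i).CanDescend n ((afterPeak h).slope i) (ray n.runUp) := by
  fin_cases i
  · exact canDescend_of_mem_Icc_runUp h (left_mem_Icc.2 (lt_add_one _).le)
  · exact canDescend_of_hasConstSlopeOn (hasConstSlopeOn_graph_Iic_runUp h)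
      (right_mem_Icc.2 n.runUp_pos.le)

lemma canDescend_of_branch {m : Stage} (hm : branching.branch n t = some m) :
    (profile i).CanDescend n ((profile i).slope m) (ray t) := by
  obtain ⟨h, ⟨rfl, rfl⟩ | ⟨rfl, rfl⟩⟩ := of_branch_eq_some hm
  · exact canDescend_runUp h
  · exact canDescend_of_mem_Icc_tip h (left_mem_Icc.2 (n.runUp_add_one_lt_tip h).le)

lemma canClimb_of_mem_Icc_tip (h : n.slope 0 ≤ n.slope 1) (ht : t ∈ Icc (n.runUp + 1) n.tip) :
    (profile i).CanClimb n (n.fall i) (ray t) := by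
  refine (canClimb_runUp_add_one h).ray ((hasConstSlopeOn_graph_Icc_tip h).mono
    (ordConnected_Icc.uIcc_subset ht (left_mem_Icc.2 (ht.1.trans ht.2))))
    (runUp_add_one_pos.le.trans ht.1) runUp_add_one_pos.le (n.fall_pos i).le ?_
  rw [abs_of_nonpos (sub_nonpos.2 ht.1), mul_neg, neg_mul]

lemma canClimb_of_mem_Icc_runUp (h : n.slope 0 ≤ n.slope 1)
    (ht : t ∈ Icc n.runUp (n.runUp + 1)) : (profile i).CanClimb n (n.drop i) (ray t) := by
  refine ((canClimb_runUp h).mono (drop_le_slope_afterPeak h i)).ray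
    ((hasConstSlopeOn_graph_Icc_runUp h).mono
      (ordConnected_Icc.uIcc_subset ht (left_mem_Icc.2 (ht.1.trans ht.2))))
    (n.runUp_pos.le.trans ht.1) n.runUp_pos.le (n.drop_nonneg i) ?_
  rw [abs_of_nonpos (sub_nonpos.2 ht.1), mul_neg, neg_mul]

lemma isBalancedIn_of_lt_of_hasConstSlopeOn {b : ℝ}
    (hconst : HasConstSlopeOn (graph i n) (n.slope i) (Iic b)) (ht : 0 < t) (htb : t < b)
    (hnone : branching.branch n t = none)
    (hclimb : (profile i).CanClimb n (n.slope i) (ray t)) :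
    (profile i).IsBalancedIn n (ray t) := by
  have hle : |n.slope i| ≤ n.slope i := (abs_of_pos (n.slope_pos i)).le
  have hslope : LocalSlopeLE (graph i n) (n.slope i) t :=
    (hconst.mono (Icc_subset_Iic_self.trans (Iic_subset_Iic.2 htb.le))).localSlopeLE
      (hconst.mono Icc_subset_Iic_self) ht htb hle hle
  exact ⟨n.slope i, (n.slope_pos i).le, n.slope_le_one i,
    (profile i).localSlopeLE_glue_ray (n.slope_pos i).le ht hslope (by simp [hnone]),
    .inr (.inr ⟨hclimb, canDescend_of_hasConstSlopeOn hconst ⟨ht.le, htb.le⟩⟩)⟩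

lemma isBalancedIn_runUp (h : n.slope 0 ≤ n.slope 1) :
    (profile i).IsBalancedIn n (ray n.runUp) := by
  have hs := ((afterPeak h).slope_pos i).le
  have hslope : LocalSlopeLE (graph i n) ((afterPeak h).slope i) n.runUp := by
    refine ((hasConstSlopeOn_graph_Iic_runUp h).mono Icc_subset_Iic_self).localSlopeLE
      (hasConstSlopeOn_graph_Icc_runUp h) n.runUp_pos (lt_add_one _) ?_ ?_
    · rw [abs_of_pos (n.slope_pos i)]
      exact slope_le_slope_afterPeak h i
    · rw [abs_neg, abs_of_nonneg (n.drop_nonneg i)]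
      exact drop_le_slope_afterPeak h i
  refine ⟨_, hs, (afterPeak h).slope_le_one i, (profile i).localSlopeLE_glue_ray hs n.runUp_pos
    hslope fun m hm => ?_, .inr (.inr ⟨canClimb_runUp h, canDescend_runUp h⟩)⟩
  obtain rfl : afterPeak h = m := Option.some_injective _ ((branch_runUp h).symm.trans hm)
  exact le_rfl

lemma isBalancedIn_of_mem_Ioo_runUp (h : n.slope 0 ≤ n.slope 1)
    (ht : t ∈ Ioo n.runUp (n.runUp + 1)) : (profile i).IsBalancedIn n (ray t) := by
  have hconst := hasConstSlopeOn_graph_Icc_runUp (i := i) h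
  have hle : |-n.drop i| ≤ n.drop i := by rw [abs_neg, abs_of_nonneg (n.drop_nonneg i)]
  have hslope : LocalSlopeLE (graph i n) (n.drop i) t :=
    (hconst.mono (Icc_subset_Icc_right ht.2.le)).localSlopeLE
      (hconst.mono (Icc_subset_Icc_left ht.1.le)) ht.1 ht.2 hle hle
  have hnone : branching.branch n t = none := branch_of_ne ht.1.ne' ht.2.ne
  exact ⟨n.drop i, n.drop_nonneg i, (n.drop_le_fall i).trans (fall_le_one h i),
    (profile i).localSlopeLE_glue_ray (n.drop_nonneg i) (n.runUp_pos.trans ht.1) hslope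
      (by simp [hnone]),
    .inr (.inr ⟨canClimb_of_mem_Icc_runUp h (Ioo_subset_Icc_self ht),
      canDescend_of_mem_Icc_runUp h (Ioo_subset_Icc_self ht)⟩)⟩

lemma isBalancedIn_of_mem_Ico_tip (h : n.slope 0 ≤ n.slope 1)
    (ht : t ∈ Ico (n.runUp + 1) n.tip) : (profile i).IsBalancedIn n (ray t) := by
  have hconst := hasConstSlopeOn_graph_Icc_tip (i := i) h
  have hle : |-n.fall i| ≤ n.fall i := by rw [abs_neg, abs_of_pos (n.fall_pos i)]
  have right := hconst.mono (Icc_subset_Icc_left ht.1)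
  refine ⟨n.fall i, (n.fall_pos i).le, fall_le_one h i, (profile i).localSlopeLE_glue_ray
    (n.fall_pos i).le (runUp_add_one_pos.trans_le ht.1) ?_ fun m hm => ?_,
    .inr (.inr ⟨canClimb_of_mem_Icc_tip h (Ico_subset_Icc_self ht),
      canDescend_of_mem_Icc_tip h (Ico_subset_Icc_self ht)⟩)⟩
  · rcases ht.1.eq_or_lt with rfl | hlt
    · refine (hasConstSlopeOn_graph_Icc_runUp h).localSlopeLE right (lt_add_one _) ht.2 ?_ hle
      rw [abs_neg, abs_of_nonneg (n.drop_nonneg i)]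
      exact n.drop_le_fall i
    · exact (hconst.mono (Icc_subset_Icc_right ht.2.le)).localSlopeLE right hlt ht.2 hle hle
  · obtain ⟨_, ⟨rfl, -⟩ | ⟨-, rfl⟩⟩ := of_branch_eq_some hm
    · exact absurd ht.1 (lt_add_one _).not_ge
    · exact le_rfl

lemma isBalancedIn_tip : (profile i).IsBalancedIn n (ray n.tip) := by
  refine ⟨1, zero_le_one, le_rfl, (profile i).localSlopeLE_glue_ray zero_le_one n.tip_pos
    (localSlopeLE_graph_tip i n) fun m hm => ?_, .inl (branching.isTip_ray n)⟩
  exact nomatch (branching.branch_tip n).symm.trans hm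

lemma isBalancedIn_of_tip_lt (ht : n.tip < t) : (profile i).IsBalancedIn n (ray t) := by
  have hconst := hasConstSlopeOn_graph_Ici_tip (i := i) (n := n)
  have hslope : LocalSlopeLE (graph i n) 0 t :=
    (hconst.mono Icc_subset_Ici_self).localSlopeLE
      (hconst.mono (Icc_subset_Ici_self.trans (Ici_subset_Ici.2 ht.le))) ht (lt_add_one t)
      (by simp) (by simp)
  have hnone : branching.branch n t = none := by
    by_contra hne
    obtain ⟨m, hm⟩ := Option.ne_none_iff_exists'.1 hne
    obtain ⟨h, ⟨rfl, -⟩ | ⟨rfl, -⟩⟩ := of_branch_eq_some hm <;>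
      linarith [n.runUp_add_one_lt_tip h]
  exact ⟨0, le_rfl, zero_le_one, (profile i).localSlopeLE_glue_ray le_rfl (n.tip_pos.trans ht)
    hslope (by simp [hnone]), .inr (.inl rfl)⟩

lemma isBalancedIn_of_lt_tip (ht : 0 < t) (htip : t < n.tip) :
    (profile i).IsBalancedIn n (ray t) := by
  by_cases h : n.slope 0 ≤ n.slope 1
  · rcases lt_trichotomy t n.runUp with hrun | rfl | hrun
    · exact isBalancedIn_of_lt_of_hasConstSlopeOn (hasConstSlopeOn_graph_Iic_runUp h) ht hrun
        (branch_of_ne hrun.ne (hrun.trans (lt_add_one _)).ne)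
        (canClimb_of_le_runUp h ht.le hrun.le (canClimb_root i _))
    · exact isBalancedIn_runUp h
    · rcases lt_or_ge t (n.runUp + 1) with hvalley | hvalley
      · exact isBalancedIn_of_mem_Ioo_runUp h ⟨hrun, hvalley⟩
      · exact isBalancedIn_of_mem_Ico_tip h ⟨hvalley, htip⟩
  · exact isBalancedIn_of_lt_of_hasConstSlopeOn (hasConstSlopeOn_graph_Iic_tip h) ht htip
      (branch_of_not_le h) (canClimb_of_le_tip h ht.le htip.le)

theorem isBalancedAt_glue_profile (i : Fin 2) (n : Stage) (x : Comb) :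
    IsBalancedAt {y | branching.IsTip n y ∨ y = root} 1 ((profile i).glue n) x := by
  refine isBalancedAt_glue (fun n t ht => ?_) (fun _ _ _ => canDescend_of_branch) n x
  rcases lt_trichotomy t n.tip with htip | rfl | htip
  · exact isBalancedIn_of_lt_tip ht htip
  · exact isBalancedIn_tip
  · exact isBalancedIn_of_tip_lt htip

lemma glue_profile_zero_ne_one (h : n.slope 0 ≤ n.slope 1) :
    (profile 0).glue n ≠ (profile 1).glue n := fun heq => by
  have hpeak i : (profile i).glue n (ray n.runUp) = n.peak i :=
    ((profile i).glue_ray n.runUp_pos.le).trans (graph_runUp h)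
  exact (peak_zero_lt_peak_one h).ne ((hpeak 0).symm.trans ((congrFun heq _).trans (hpeak 1)))

lemma glue_profile_eq {x : Comb} (hx : branching.IsTip n x) (i j : Fin 2) :
    (profile i).glue n x = (profile j).glue n x := by
  obtain ⟨m, hm⟩ := exists_glue_eq_val_tip hx
  rw [hm, hm]
  exact graph_tip_eq i j

lemma glue_profile_nonneg {x : Comb} (hx : branching.IsTip n x) (i : Fin 2) :
    0 ≤ (profile i).glue n x := by
  obtain ⟨m, hm⟩ := exists_glue_eq_val_tip hx
  rw [hm]
  exact graph_tip_nonneg i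

/-- The label of the initial half-line of the example. -/
def start : Stage where
  val := 0
  slope := ![1 / 2, 2 / 3]
  val_zero_nonneg := le_rfl
  val_zero_le := le_rfl
  slope_pos := Fin.forall_fin_two.2 ⟨by norm_num, by norm_num⟩
  slope_zero_le_one := by norm_num
  slope_one_sq_lt := by norm_num
  val_lt_or_slope_lt := .inr (by norm_num)

lemma start_slope_zero_le : start.slope 0 ≤ start.slope 1 := by norm_num [start]

end Stage

/-- Uniqueness of AM extensions can fail for unbounded nonnegative Lipschitz boundary data:
there is a length space `X`, a nonempty `Y ⊆ X`, and a nonnegative Lipschitz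
`F` on `Y` with two distinct AM extensions. -/
theorem stmt2 :
    ∃ (X : Type) (inst : MetricSpace X), IsLengthSpace X ∧
      ∃ (Y : Set X) (F u₁ u₂ : X → ℝ), Y.Nonempty ∧
        (∃ K : NNReal, LipschitzOnWith K F Y) ∧ (∀ y ∈ Y, 0 ≤ F y) ∧
        u₁ ≠ u₂ ∧ IsAMExtension Y F u₁ ∧ IsAMExtension Y F u₂ := by
  let Y : Set Comb := {y | Stage.branching.IsTip Stage.start y ∨ y = root}
  let u (i : Fin 2) : Comb → ℝ := (Stage.profile i).glue Stage.start
  have balanced i : ∀ x, IsBalancedAt Y 1 (u i) x :=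
    Stage.isBalancedAt_glue_profile i Stage.start
  have lipschitz : LipschitzWith 1 (u 0) :=
    lipschitzWith_of_isBalancedAt joinedByGeodesic (balanced 0)
  have eqOn i : EqOn (u i) (u 0) Y := by
    rintro y (hy | rfl)
    · exact Stage.glue_profile_eq hy i 0
    · exact (Stage.graph_zero i Stage.start).trans (Stage.graph_zero 0 Stage.start).symm
  have nonneg : ∀ y ∈ Y, 0 ≤ u 0 y := by
    rintro y (hy | rfl)
    · exact Stage.glue_profile_nonneg hy 0
    · exact (Stage.graph_zero 0 Stage.start).ge
  have isAM i : IsAMExtension Y (u 0) (u i) :=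
    isAMExtension_of_isBalancedAt joinedByGeodesic (balanced i) (eqOn i)
  exact ⟨Comb, inferInstance, isLengthSpace_of_joinedByGeodesic joinedByGeodesic, Y, u 0, u 0, u 1,
    ⟨root, .inr rfl⟩, ⟨1, lipschitz.lipschitzOnWith⟩, nonneg,
    Stage.glue_profile_zero_ne_one Stage.start_slope_zero_le, isAM 0, isAM 1⟩

end
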